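/- Let (A, ≺_{α,β}, ≻_{α,β}, Ω) be an Ω-relative pre-anti-flexible algebra with underlying Ω-relative anti-flexible product x ⊛_{α,β} y := x ≺_{α,β} y + x ≻_{α,β} y. Define [x,y]_{α,β} := x ⊛_{α,β} y − y ⊛_{β,α} x = (x ≻_{α,β} y + x ≺_{α,β} y) − (y ≻_{β,α} x + y ≺_{β,α} x). Then (A, [·,·]_{α,β}, Ω) is an Ω-relative Lie algebra: [x,y]_{α,β} + [y,x]_{β,α} = 0 and [[x,y]_{α,β}, z]_{αβ,γ} + [[y,z]_{β,γ}, x]_{βγ,α} + [[z,x]_{γ,α}, y]_{γα,β} = 0 for all x, y, z ∈ A and α, β, γ ∈ Ω. -/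

import Mathlib

/-!
The associator of `⊛ = ≺ + ≻` is the sum of a left, a middle and a right part. Exchanging the two
outer arguments fixes the middle part by the first axiom and interchanges the left and right parts
by the second, so `⊛` is anti-flexible: `(x, y, z) = (z, y, x)`. The Jacobiator of the commutator
is the cyclic sum of `(x, y, z) - (z, y, x)`, once the products of indices may be commuted.
-/

/-- Families of bilinear operations on `A` indexed by pairs of elements of `Ω`. -/
abbrev RelativeOperation (k Ω A : Type*) [CommSemiring k] [AddCommMonoid A] [Module k A] :=
  Ω → Ω → A →ₗ[k] A →ₗ[k] A

namespace RelativeOperation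

variable {k Ω A : Type*} [CommSemiring k] [AddCommGroup A] [Module k A]

/-- The relative commutator `[x, y]_{α,β} = x * y - y * x`, where the second product carries the
exchanged indices `(β, α)`. -/
def commutator (mul : RelativeOperation k Ω A) : RelativeOperation k Ω A :=
  fun α β => mul α β - (mul β α).flip

theorem commutator_apply (mul : RelativeOperation k Ω A) (α β : Ω) (x y : A) :
    commutator mul α β x y = mul α β x y - mul β α y x :=
  rfl

theorem commutator_add_swap (mul : RelativeOperation k Ω A) (α β : Ω) (x y : A) :
    commutator mul α β x y + commutator mul β α y x = 0 := by
  simp only [commutator_apply, sub_add_sub_cancel, sub_self]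

section Mul

variable [Mul Ω]

/-- The relative associator `(x, y, z)_{α,β,γ} = (x * y) * z - x * (y * z)`; a product of two
elements carries the product of their indices. -/
def associator (mul : RelativeOperation k Ω A) (α β γ : Ω) (x y z : A) : A :=
  mul (α * β) γ (mul α β x y) z - mul α (β * γ) x (mul β γ y z)

/-- The part `(x ⊛ y) ≻ z - x ≻ (y ≻ z)` of the associator of `⊛ = ≺ + ≻`. -/
def leftAssociator (prec succ : RelativeOperation k Ω A) (α β γ : Ω) (x y z : A) : A :=
  succ (α * β) γ ((prec + succ) α β x y) z - succ α (β * γ) x (succ β γ y z)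

/-- The part `(x ≻ y) ≺ z - x ≻ (y ≺ z)` of the associator of `⊛ = ≺ + ≻`. -/
def middleAssociator (prec succ : RelativeOperation k Ω A) (α β γ : Ω) (x y z : A) : A :=
  prec (α * β) γ (succ α β x y) z - succ α (β * γ) x (prec β γ y z)

/-- The part `(x ≺ y) ≺ z - x ≺ (y ⊛ z)` of the associator of `⊛ = ≺ + ≻`. -/
def rightAssociator (prec succ : RelativeOperation k Ω A) (α β γ : Ω) (x y z : A) : A :=
  prec (α * β) γ (prec α β x y) z - prec α (β * γ) x ((prec + succ) β γ y z)

/-- The cyclic sum `[[x, y], z] + [[y, z], x] + [[z, x], y]` with the relative indices. -/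
def jacobiator (br : RelativeOperation k Ω A) (α β γ : Ω) (x y z : A) : A :=
  br (α * β) γ (br α β x y) z + br (β * γ) α (br β γ y z) x + br (γ * α) β (br γ α z x) y

/-- Relative anti-flexible products: the associator is symmetric in its outer arguments. -/
def IsAntiFlexible (mul : RelativeOperation k Ω A) : Prop :=
  ∀ (α β γ : Ω) (x y z : A), associator mul α β γ x y z = associator mul γ β α z y x

/-- The axioms of a relative pre-anti-flexible algebra for `≺ = prec` and `≻ = succ`, expressed
through the three parts of the associator of `≺ + ≻`. -/
structure IsPreAntiFlexible (prec succ : RelativeOperation k Ω A) : Prop where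
  middle_eq_middle_reverse : ∀ (α β γ : Ω) (x y z : A),
    middleAssociator prec succ α β γ x y z = middleAssociator prec succ γ β α z y x
  left_eq_right_reverse : ∀ (α β γ : Ω) (x y z : A),
    leftAssociator prec succ α β γ x y z = rightAssociator prec succ γ β α z y x

/-- Relative Lie brackets: skew-symmetry and the Jacobi identity. -/
structure IsLie (br : RelativeOperation k Ω A) : Prop where
  add_swap : ∀ (α β : Ω) (x y : A), br α β x y + br β α y x = 0
  jacobi : ∀ (α β γ : Ω) (x y z : A), jacobiator br α β γ x y z = 0

theorem associator_add (prec succ : RelativeOperation k Ω A) (α β γ : Ω) (x y z : A) :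
    associator (prec + succ) α β γ x y z =
      leftAssociator prec succ α β γ x y z + middleAssociator prec succ α β γ x y z +
        rightAssociator prec succ α β γ x y z := by
  simp only [associator, leftAssociator, middleAssociator, rightAssociator, Pi.add_apply,
    LinearMap.add_apply, map_add]
  abel

theorem IsPreAntiFlexible.isAntiFlexible_add {prec succ : RelativeOperation k Ω A}
    (h : IsPreAntiFlexible prec succ) : IsAntiFlexible (prec + succ) := by
  intro α β γ x y z
  rw [associator_add, associator_add, h.left_eq_right_reverse α β γ,
    h.middle_eq_middle_reverse α β γ, h.left_eq_right_reverse γ β α]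
  abel

end Mul

section CommMagma

variable [CommMagma Ω]

theorem jacobiator_commutator (mul : RelativeOperation k Ω A) (α β γ : Ω) (x y z : A) :
    jacobiator (commutator mul) α β γ x y z =
      (associator mul α β γ x y z - associator mul γ β α z y x) +
        (associator mul β γ α y z x - associator mul α γ β x z y) +
          (associator mul γ α β z x y - associator mul β α γ y x z) := by
  simp only [jacobiator, associator, commutator_apply, map_sub, LinearMap.sub_apply,
    mul_comm β α, mul_comm γ β, mul_comm α γ]
  abel

theorem IsAntiFlexible.isLie_commutator {mul : RelativeOperation k Ω A}
    (h : IsAntiFlexible mul) : IsLie (commutator mul) where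
  add_swap := commutator_add_swap mul
  jacobi α β γ x y z := by
    rw [jacobiator_commutator, h α β γ, h β γ α, h γ α β]
    simp only [sub_self, add_zero]

end CommMagma

end RelativeOperation

open RelativeOperation

theorem relativePreAntiFlexible_to_relativeLie_general {k Ω A : Type*} [CommSemiring k]
    [CommMagma Ω] [AddCommGroup A] [Module k A] {prec succ : RelativeOperation k Ω A}
    (h : IsPreAntiFlexible prec succ) : IsLie (commutator (prec + succ)) :=
  h.isAntiFlexible_add.isLie_commutator

/-- the commutator `[x,y]_{α,β} := x ⊛_{α,β} y − y ⊛_{β,α} x` of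
the underlying relative anti-flexible product of an Ω-relative pre-anti-flexible
algebra is an Ω-relative Lie bracket. -/
theorem relativePreAntiFlexible_to_relativeLie
    (k : Type*) [Field k] (Ω : Type*) [CommSemigroup Ω]
    (A : Type*) [AddCommGroup A] [Module k A]
    (prec succ : Ω → Ω → A →ₗ[k] A →ₗ[k] A)
    (h1 : ∀ (α β γ : Ω) (x y z : A),
      prec (α * β) γ (succ α β x y) z - succ α (β * γ) x (prec β γ y z) =
        prec (γ * β) α (succ γ β z y) x - succ γ (β * α) z (prec β α y x))
    (h2 : ∀ (α β γ : Ω) (x y z : A),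
      succ (α * β) γ (prec α β x y + succ α β x y) z - succ α (β * γ) x (succ β γ y z) =
        prec (γ * β) α (prec γ β z y) x - prec γ (β * α) z (prec β α y x + succ β α y x))
    (ast : Ω → Ω → A → A → A)
    (hast : ∀ (α β : Ω) (x y : A), ast α β x y = prec α β x y + succ α β x y)
    (br : Ω → Ω → A → A → A)
    (hbr : ∀ (α β : Ω) (x y : A), br α β x y = ast α β x y - ast β α y x) :
    (∀ (α β : Ω) (x y : A), br α β x y + br β α y x = 0) ∧
    (∀ (α β γ : Ω) (x y z : A),
      br (α * β) γ (br α β x y) z + br (β * γ) α (br β γ y z) x +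
        br (γ * α) β (br γ α z x) y = 0) := by
  have lie := relativePreAntiFlexible_to_relativeLie_general (IsPreAntiFlexible.mk h1 h2)
  simp only [hbr, hast]
  exact ⟨lie.add_swap, lie.jacobi⟩
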